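/- arXiv:1911.04718 — 2 statements merged into one kernel-verified Lean document; each statement's English description precedes it below -/
import Mathlib

section
/- Let f : ℝ/ℤ → [0,1] be an integrable Borel function, let N, ℓ ≥ 1 be integers, and let ε, ε' ∈ {0,1}^N. Assume the matrices T_N(f) + D_N(ε−1) and T_N(f) + D_N(ε'−1) are invertible (which holds whenever f ≢ 0 and f ≢ 1), so that in particular μ_f([ε]) > 0 and μ_f([ε']) > 0. Then μ_f([ε] ∩ σ^{−(N+ℓ)}[ε']) / ( μ_f([ε]) · μ_f([ε']) ) = det( I − H^f_{N,ℓ}(ε,ε') ), where H^f_{N,ℓ}(ε,ε') := [T_N(f)+D_N(ε'−1)]^{−1} · Λ_{N,ℓ}(f)* · [T_N(f)+D_N(ε−1)]^{−1} · Λ_{N,ℓ}(f). -/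
open MeasureTheory Filter Matrix
open scoped ENNReal

/-- The `n`-th Fourier coefficient of a function on the circle `ℝ/ℤ`. -/
noncomputable def fhat (f : AddCircle (1:ℝ) → ℝ) (n : ℤ) : ℂ :=
  fourierCoeff (fun t => (f t : ℂ)) n

/-- `μ` is the stationary determinantal measure on `{0,1}^ℤ` with kernel `f̂(n-m)`. -/
def IsDeterminantal (f : AddCircle (1:ℝ) → ℝ) (μ : Measure (ℤ → Bool)) : Prop :=
  ∀ s : Finset ℤ,
    ((μ {x | ∀ n ∈ s, x n = true}).toReal : ℂ) =
      Matrix.det (Matrix.of fun i j : s => fhat f ((i:ℤ) - (j:ℤ)))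

/-- The σ-algebra on `ℤ → Bool` generated by the coordinates in `S`. -/
def coordSigma (S : Set ℤ) : MeasurableSpace (ℤ → Bool) :=
  MeasurableSpace.comap (fun x (n : S) => x (n : ℤ)) inferInstance

/-- The ψ-function `ψ_μ(ℓ)` of a measure on `{0,1}^ℤ`, valued in `[0,∞]`. -/
noncomputable def psi (μ : Measure (ℤ → Bool)) (ℓ : ℕ) : ℝ≥0∞ :=
  ⨆ (A : Set (ℤ → Bool)) (_ : MeasurableSet[coordSigma {n : ℤ | n ≤ 0}] A) (_ : 0 < μ A)
    (B : Set (ℤ → Bool)) (_ : MeasurableSet[coordSigma {n : ℤ | (ℓ : ℤ) ≤ n}] B) (_ : 0 < μ B),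
      ENNReal.ofReal |(μ (A ∩ B)).toReal / ((μ A).toReal * (μ B).toReal) - 1|

/-- The cylinder set `[ε] = {x : x_1 = ε_1, …, x_N = ε_N}` in `{0,1}^ℤ`. -/
def cyl {N : ℕ} (ε : Fin N → Bool) : Set (ℤ → Bool) :=
  {x | ∀ i : Fin N, x ((i : ℤ) + 1) = ε i}

/-- The shift `σ` on `{0,1}^ℤ`. -/
def shift (x : ℤ → Bool) : ℤ → Bool := fun n => x (n + 1)

/-- A boolean seen as the complex number `0` or `1`. -/
def bc (b : Bool) : ℂ := if b then 1 else 0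

/-- The `N×N` Toeplitz matrix `T_N(f) = (f̂(i-j))_{1 ≤ i,j ≤ N}`. -/
noncomputable def Tmat (f : AddCircle (1:ℝ) → ℝ) (N : ℕ) : Matrix (Fin N) (Fin N) ℂ :=
  Matrix.of fun i j => fhat f (((i : ℕ) : ℤ) - ((j : ℕ) : ℤ))

/-- The `N×N` matrix `Λ_{N,ℓ}(f) = (f̂(i-(j+N+ℓ)))_{1 ≤ i,j ≤ N}`. -/
noncomputable def Lmat (f : AddCircle (1:ℝ) → ℝ) (N ℓ : ℕ) : Matrix (Fin N) (Fin N) ℂ :=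
  Matrix.of fun i j => fhat f (((i : ℕ) : ℤ) - (((j : ℕ) : ℤ) + (N : ℤ) + (ℓ : ℤ)))

lemma fhat_conj (f : AddCircle (1:ℝ) → ℝ) (n : ℤ) : star (fhat f n) = fhat f (-n) := by
  unfold fhat fourierCoeff
  rw [← starRingEnd_apply, ← integral_conj]
  congr 1
  ext t
  simp [fourier_neg]

/-- The kernel matrix along `p`. -/
noncomputable def Kp {ι : Type*} (f : AddCircle (1:ℝ) → ℝ) (p : ι → ℤ) : Matrix ι ι ℂ :=
  Matrix.of fun i j => fhat f (p i - p j)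

noncomputable def Mab {ι : Type*} [DecidableEq ι] (f : AddCircle (1:ℝ) → ℝ) (p : ι → ℤ)
    (A B : Finset ι) : Matrix ι ι ℂ :=
  Matrix.of fun i => if i ∈ A then Kp f p i else
    if i ∈ B then (1 : Matrix ι ι ℂ) i - Kp f p i else (1 : Matrix ι ι ℂ) i

lemma meas_aux {ι : Type*} (p : ι → ℤ) (A B : Finset ι) :
    MeasurableSet {x : ℤ → Bool | (∀ i ∈ A, x (p i) = true) ∧ (∀ i ∈ B, x (p i) = false)} := by
  have h : {x : ℤ → Bool | (∀ i ∈ A, x (p i) = true) ∧ (∀ i ∈ B, x (p i) = false)} =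
      (⋂ i ∈ A, (fun x : ℤ → Bool => x (p i)) ⁻¹' {true}) ∩
      (⋂ i ∈ B, (fun x : ℤ → Bool => x (p i)) ⁻¹' {false}) := by
    ext x; simp
  rw [h]
  refine MeasurableSet.inter ?_ ?_ <;>
  exact Finset.measurableSet_biInter _ fun i _ => (measurable_pi_apply _) (measurableSet_singleton _)

lemma base_aux {ι : Type*} [Fintype ι] [DecidableEq ι] (f : AddCircle (1:ℝ) → ℝ)
    (μ : Measure (ℤ → Bool)) (hdet : IsDeterminantal f μ)
    (p : ι → ℤ) (hp : Function.Injective p) (A : Finset ι) :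
    ((μ {x | ∀ i ∈ A, x (p i) = true}).toReal : ℂ) = (Mab f p A ∅).det := by
  have h1 := hdet (A.map ⟨p, hp⟩)
  have h2 : {x : ℤ → Bool | ∀ n ∈ A.map ⟨p, hp⟩, x n = true} =
      {x | ∀ i ∈ A, x (p i) = true} := by
    ext x; simp
  rw [h2] at h1
  rw [h1, Matrix.twoBlockTriangular_det (Mab f p A ∅) (fun i => i ∈ A)]
  · have e2 : (toSquareBlockProp (Mab f p A ∅) fun i => ¬ i ∈ A) = 1 := by
      ext i j
      have := i.2
      simp [toSquareBlockProp, Mab, this, Matrix.one_apply, Subtype.ext_iff]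
    let g : {i // i ∈ A} → {n // n ∈ A.map ⟨p, hp⟩} :=
      fun i => ⟨p i.1, Finset.mem_map_of_mem ⟨p, hp⟩ i.2⟩
    have hg : Function.Bijective g := by
      constructor
      · intro i j h
        exact Subtype.ext (hp (congrArg Subtype.val h))
      · rintro ⟨n, hn⟩
        obtain ⟨i, hi, rfl⟩ := Finset.mem_map.1 hn
        exact ⟨⟨i, hi⟩, rfl⟩
    have e3 : (Matrix.of fun i j : {n // n ∈ A.map ⟨p, hp⟩} =>
        fhat f ((i:ℤ) - (j:ℤ))).submatrix (Equiv.ofBijective g hg) (Equiv.ofBijective g hg) =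
        toSquareBlockProp (Mab f p A ∅) (fun i => i ∈ A) := by
      ext i j
      have hM : Mab f p A ∅ i j = fhat f (p i - p j) := by
        simp [Mab, Kp]
      exact hM.symm
    have e4 := Matrix.det_submatrix_equiv_self (Equiv.ofBijective g hg)
      (Matrix.of fun i j : {n // n ∈ A.map ⟨p, hp⟩} => fhat f ((i:ℤ) - (j:ℤ)))
    rw [e2, det_one, mul_one, ← e4, e3]
    congr!
  · intro i hi j hj
    have : i ≠ j := by rintro rfl; exact hi hj
    simp [Mab, hi, this]

lemma ind_aux {ι : Type*} [Fintype ι] [DecidableEq ι] (f : AddCircle (1:ℝ) → ℝ)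
    (μ : Measure (ℤ → Bool)) [IsProbabilityMeasure μ] (hdet : IsDeterminantal f μ)
    (p : ι → ℤ) (hp : Function.Injective p) (B : Finset ι) : ∀ (A : Finset ι), Disjoint A B →
    ((μ {x | (∀ i ∈ A, x (p i) = true) ∧ (∀ i ∈ B, x (p i) = false)}).toReal : ℂ)
      = (Mab f p A B).det := by
  induction B using Finset.induction_on with
  | empty => intro A _; simpa using base_aux f μ hdet p hp A
  | insert k B hk ih =>
    intro A hA
    rw [Finset.disjoint_insert_right] at hA
    have i1 := ih A hA.2
    have i2 := ih (insert k A) (by rw [Finset.disjoint_insert_left]; exact ⟨hk, hA.2⟩)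
    have hm : μ {x | (∀ i ∈ A, x (p i) = true) ∧ (∀ i ∈ B, x (p i) = false)} =
        μ {x | (∀ i ∈ insert k A, x (p i) = true) ∧ (∀ i ∈ B, x (p i) = false)} +
        μ {x | (∀ i ∈ A, x (p i) = true) ∧ (∀ i ∈ insert k B, x (p i) = false)} := by
      rw [← measure_union _ (meas_aux _ _ _)]
      · congr 1
        ext x
        simp only [Set.mem_setOf_eq, Set.mem_union, Finset.forall_mem_insert]
        cases x (p k) <;> simp
      · rw [Set.disjoint_left]
        rintro x ⟨h, -⟩ ⟨-, h'⟩
        have a := h k (by simp)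
        have b := h' k (by simp)
        simp [a] at b
    rw [hm, ENNReal.toReal_add (measure_ne_top _ _) (measure_ne_top _ _)] at i1
    push_cast at i1
    rw [i2] at i1
    rw [eq_sub_of_add_eq' i1]
    have e1 : Mab f p A B = (Mab f p A B).updateRow k ((1 : Matrix ι ι ℂ) k) := by
      ext i j
      by_cases h : i = k
      · subst h; simp [Mab, hA.1, hk]
      · simp [Matrix.updateRow_apply, h]
    have e2 : Mab f p (insert k A) B = (Mab f p A B).updateRow k (Kp f p k) := by
      ext i j
      by_cases h : i = k
      · subst h; simp [Mab]
      · simp [Matrix.updateRow_apply, h, Mab]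
    have e3 : Mab f p A (insert k B) =
        (Mab f p A B).updateRow k ((1 : Matrix ι ι ℂ) k + (-1 : ℂ) • Kp f p k) := by
      ext i j
      by_cases h : i = k
      · subst h; simp [Mab, hA.1, sub_eq_add_neg]
      · simp [Matrix.updateRow_apply, h, Mab]
    rw [e3, det_updateRow_add, det_updateRow_smul, ← e1, ← e2]
    ring

lemma main_aux {ι : Type*} [Fintype ι] [DecidableEq ι] (f : AddCircle (1:ℝ) → ℝ)
    (μ : Measure (ℤ → Bool)) [IsProbabilityMeasure μ] (hdet : IsDeterminantal f μ)
    (p : ι → ℤ) (hp : Function.Injective p) (ε : ι → Bool) :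
    ((μ {x | ∀ i, x (p i) = ε i}).toReal : ℂ)
      = (∏ i, (2 * bc (ε i) - 1)) * (Kp f p + diagonal (fun i => bc (ε i) - 1)).det := by
  have h := ind_aux f μ hdet p hp (Finset.univ.filter fun i => ε i = false)
    (Finset.univ.filter fun i => ε i = true) (by
      rw [Finset.disjoint_left]; intro i; simp +contextual)
  have hs : {x : ℤ → Bool | ∀ i, x (p i) = ε i} =
    {x | (∀ i ∈ Finset.univ.filter (fun i => ε i = true), x (p i) = true) ∧
      (∀ i ∈ Finset.univ.filter (fun i => ε i = false), x (p i) = false)} := by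
    ext x
    simp only [Set.mem_setOf_eq, Finset.mem_filter, Finset.mem_univ, true_and]
    constructor
    · intro h; exact ⟨fun i hi => (h i).trans hi, fun i hi => (h i).trans hi⟩
    · rintro ⟨h1, h2⟩ i
      cases hi : ε i
      · exact h2 i hi
      · exact h1 i hi
  rw [hs, h, ← det_diagonal, ← det_mul]
  congr 1
  ext i j
  rw [diagonal_mul]
  cases hi : ε i
  · by_cases hij : i = j
    · subst hij; simp [Mab, hi, bc]; ring
    · simp [Mab, hi, bc, hij]
  · by_cases hij : i = j
    · subst hij; simp [Mab, hi, bc]; ring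
    · simp [Mab, hi, bc, hij]; ring

lemma shift_iter (k : ℕ) (x : ℤ → Bool) (n : ℤ) : shift^[k] x n = x (n + k) := by
  induction k generalizing x with
  | zero => simp
  | succ k ih => rw [Function.iterate_succ_apply, ih, shift]; push_cast; congr 1; ring

lemma prod_ne {ι : Type*} [Fintype ι] (ε : ι → Bool) : ∏ i, (2 * bc (ε i) - 1) ≠ 0 := by
  rw [Finset.prod_ne_zero_iff]
  intro i _
  cases ε i <;> norm_num [bc]

/-- `μ_f([ε] ∩ σ^{-(N+ℓ)}[ε']) / (μ_f([ε])·μ_f([ε'])) = det(I - H^f_{N,ℓ}(ε,ε'))`. -/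
theorem ratio_eq_det
    (f : AddCircle (1:ℝ) → ℝ) (hmeas : Measurable f)
    (h0 : ∀ t, 0 ≤ f t) (h1 : ∀ t, f t ≤ 1) (hint : Integrable f)
    (μ : Measure (ℤ → Bool)) [IsProbabilityMeasure μ] (hdet : IsDeterminantal f μ)
    (N ℓ : ℕ) (hN : 1 ≤ N) (hℓ : 1 ≤ ℓ) (ε ε' : Fin N → Bool)
    (hinv : IsUnit (Tmat f N + Matrix.diagonal (fun i => bc (ε i) - 1)).det)
    (hinv' : IsUnit (Tmat f N + Matrix.diagonal (fun i => bc (ε' i) - 1)).det) :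
    0 < μ (cyl ε) ∧ 0 < μ (cyl ε') ∧
      (((μ (cyl ε ∩ shift^[N + ℓ] ⁻¹' cyl ε')).toReal /
          ((μ (cyl ε)).toReal * (μ (cyl ε')).toReal) : ℝ) : ℂ) =
        (1 - (Tmat f N + Matrix.diagonal (fun i => bc (ε' i) - 1))⁻¹ * (Lmat f N ℓ)ᴴ *
            (Tmat f N + Matrix.diagonal (fun i => bc (ε i) - 1))⁻¹ * Lmat f N ℓ).det := by
  have hpi : Function.Injective (fun i : Fin N => ((i : ℤ) + 1)) := by
    intro i j h
    simp only at h
    ext; omega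
  have hK : Kp f (fun i : Fin N => ((i : ℤ) + 1)) = Tmat f N := by
    ext i j
    simp [Kp, Tmat]
  have m1 := fun e : Fin N → Bool => main_aux f μ hdet _ hpi e
  rw [hK] at m1
  have m1' : ∀ e : Fin N → Bool, ((μ (cyl e)).toReal : ℂ) = (∏ i, (2 * bc (e i) - 1)) *
    (Tmat f N + diagonal (fun i => bc (e i) - 1)).det := m1
  have pos : ∀ e : Fin N → Bool, IsUnit (Tmat f N + diagonal (fun i => bc (e i) - 1)).det →
      0 < μ (cyl e) := by
    intro e he
    rw [pos_iff_ne_zero]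
    intro h
    have := m1' e
    rw [h] at this
    simp only [ENNReal.toReal_zero, Complex.ofReal_zero] at this
    exact mul_ne_zero (prod_ne e) he.ne_zero this.symm
  refine ⟨pos ε hinv, pos ε' hinv', ?_⟩
  set q : Fin N ⊕ Fin N → ℤ :=
    Sum.elim (fun i => (i : ℤ) + 1) (fun i => (i : ℤ) + 1 + ((N + ℓ : ℕ) : ℤ)) with hq
  have hqi : Function.Injective q := by
    rintro (i | i) (j | j) h <;> simp only [hq, Sum.elim_inl, Sum.elim_inr] at h
    · congr 1; ext; omega
    · have := i.2; omega
    · have := j.2; omega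
    · congr 1; ext; omega
  have m2 := main_aux f μ hdet q hqi (Sum.elim ε ε')
  have hs : {x : ℤ → Bool | ∀ i, x (q i) = Sum.elim ε ε' i} =
      cyl ε ∩ shift^[N + ℓ] ⁻¹' cyl ε' := by
    ext x
    simp only [cyl, Set.mem_setOf_eq, Set.mem_inter_iff, Set.mem_preimage, shift_iter, Sum.forall,
      hq, Sum.elim_inl, Sum.elim_inr]
  have hM : Kp f q + diagonal (fun i => bc (Sum.elim ε ε' i) - 1) =
      fromBlocks (Tmat f N + diagonal (fun i => bc (ε i) - 1)) (Lmat f N ℓ) (Lmat f N ℓ)ᴴ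
        (Tmat f N + diagonal (fun i => bc (ε' i) - 1)) := by
    ext (i | i) (j | j)
    · simp [Kp, Tmat, hq, diagonal_apply]
    · simp [Kp, Lmat, hq]; congr 1; ring
    · simp only [Kp, Lmat, hq, fromBlocks_apply₂₁, conjTranspose_apply, of_apply, fhat_conj,
        Matrix.add_apply]
      simp; congr 1; ring
    · simp [Kp, Tmat, hq, diagonal_apply]
  rw [hs, hM, Fintype.prod_sum_type] at m2
  simp only [Sum.elim_inl, Sum.elim_inr] at m2
  push_cast
  rw [m2, m1' ε, m1' ε']
  have d1 := hinv.ne_zero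
  have d2 := hinv'.ne_zero
  have p1 := prod_ne ε
  have p2 := prod_ne ε'
  generalize (∏ i, (2 * bc (ε i) - 1)) = P at *
  generalize (∏ i, (2 * bc (ε' i) - 1)) = P' at *
  generalize (Tmat f N + diagonal (fun i => bc (ε i) - 1)) = A at *
  generalize (Tmat f N + diagonal (fun i => bc (ε' i) - 1)) = D at *
  letI := invertibleOfIsUnitDet A hinv
  rw [det_fromBlocks₁₁, invOf_eq_nonsing_inv]
  have e : D - (Lmat f N ℓ)ᴴ * A⁻¹ * Lmat f N ℓ =
      D * (1 - D⁻¹ * (Lmat f N ℓ)ᴴ * A⁻¹ * Lmat f N ℓ) := by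
    rw [mul_sub, mul_one]
    simp only [← mul_assoc]
    rw [mul_nonsing_inv _ hinv', one_mul]
  rw [e, det_mul]
  field_simp
end

section
/- Let f : ℝ/ℤ → [0,1] be an integrable Borel function and let N, ℓ ≥ 1 be integers such that T_N(f) is invertible (hence 0 < T_N(f) ≤ I). Then det( I − T_N(f)^{−1} · Λ_{N,ℓ}(f)* · T_N(f)^{−1} · Λ_{N,ℓ}(f) ) ≤ exp( − ‖Λ_{N,ℓ}(f)‖_HS² ). -/
open MeasureTheory Matrix
open scoped ComplexOrder

/-- The squared Hilbert–Schmidt (Frobenius) norm `‖M‖_HS² = Σ_{i,j} |M_{ij}|²`. -/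
noncomputable def frobSq {N : ℕ} (M : Matrix (Fin N) (Fin N) ℂ) : ℝ :=
  ∑ i, ∑ j, ‖M i j‖ ^ 2

open scoped MatrixOrder Matrix.Norms.L2Operator in
lemma psd_fac {N : ℕ} (A : Matrix (Fin N) (Fin N) ℂ) (hA : A.PosSemidef) :
    ∃ B : Matrix (Fin N) (Fin N) ℂ, A = Bᴴ * B := by
  obtain ⟨B, hB⟩ := CStarAlgebra.nonneg_iff_eq_star_mul_self.mp hA.nonneg
  exact ⟨B, hB⟩

lemma psd_gen (f : AddCircle (1:ℝ) → ℝ) (hmeas : Measurable f)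
    (h0 : ∀ t, 0 ≤ f t) (h1 : ∀ t, f t ≤ 1) {ι : Type} [Fintype ι] (a : ι → ℤ) :
    (Matrix.of fun i j => fhat f (a i - a j)).PosSemidef := by
  have hfi : Integrable (fun t => (f t : ℂ)) AddCircle.haarAddCircle := by
    refine Integrable.of_bound (C := 1) (by fun_prop) (.of_forall fun t => ?_)
    simp only [Complex.norm_real, Real.norm_eq_abs]
    rw [abs_of_nonneg (h0 t)]; exact h1 t
  have hfi2 : ∀ n, Integrable (fun t => fourier n t * (f t : ℂ)) AddCircle.haarAddCircle :=
    fun n => hfi.fourier_smul n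
  refine .of_dotProduct_mulVec_nonneg ?_ fun x => ?_
  · ext i j
    simp only [conjTranspose_apply, of_apply, fhat, fourierCoeff]
    rw [RCLike.star_def, ← integral_conj]
    congr 1; ext t
    simp only [smul_eq_mul, map_mul, Complex.conj_ofReal]
    rw [← fourier_neg, neg_neg, neg_sub]
  · have key : star x ⬝ᵥ (Matrix.of fun i j => fhat f (a i - a j)) *ᵥ x
        = ∫ t, (((f t) * ‖∑ j, fourier (a j) t * x j‖^2 : ℝ) : ℂ) ∂AddCircle.haarAddCircle := by
      have : ∀ t : AddCircle (1:ℝ), (((f t) * ‖∑ j, fourier (a j) t * x j‖^2 : ℝ) : ℂ)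
          = ∑ i, ∑ j, (star (x i) * x j) * (fourier (-(a i - a j)) t * (f t : ℂ)) := by
        intro t
        push_cast
        rw [← Complex.conj_mul', map_sum, Finset.sum_mul_sum, Finset.mul_sum]
        refine Finset.sum_congr rfl fun i _ => ?_
        rw [Finset.mul_sum]
        refine Finset.sum_congr rfl fun j _ => ?_
        rw [neg_sub, sub_eq_add_neg, fourier_add, fourier_neg, map_mul, RCLike.star_def]
        ring
      simp_rw [this]
      rw [integral_finsetSum _ fun i _ => integrable_finsetSum _ fun j _ => (hfi2 _).const_mul _]
      simp only [dotProduct, mulVec, Finset.mul_sum, of_apply]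
      refine Finset.sum_congr rfl fun i _ => ?_
      rw [integral_finsetSum _ fun j _ => (hfi2 _).const_mul _]
      refine Finset.sum_congr rfl fun j _ => ?_
      rw [integral_const_mul, fhat, fourierCoeff]
      simp only [smul_eq_mul, Pi.star_apply]
      ring
    rw [key, integral_complex_ofReal]
    exact_mod_cast integral_nonneg fun t => mul_nonneg (h0 t) (sq_nonneg _)

lemma fhat_one_sub (f : AddCircle (1:ℝ) → ℝ) (hmeas : Measurable f)
    (h0 : ∀ t, 0 ≤ f t) (h1 : ∀ t, f t ≤ 1) (n : ℤ) :
    fhat (fun t => 1 - f t) n = (if n = 0 then 1 else 0) - fhat f n := by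
  have hfi : Integrable (fun t => (f t : ℂ)) AddCircle.haarAddCircle := by
    refine Integrable.of_bound (C := 1) (by fun_prop) (.of_forall fun t => ?_)
    simp only [Complex.norm_real, Real.norm_eq_abs]
    rw [abs_of_nonneg (h0 t)]; exact h1 t
  have h1' : ∫ t : AddCircle (1:ℝ), fourier (-n) t * (1:ℂ) ∂AddCircle.haarAddCircle = if n = 0 then 1 else 0 := by
    have := (orthonormal_iff_ite.1 (orthonormal_fourier (T := 1))) n 0
    rw [ContinuousMap.inner_toLp] at this
    rw [← this]
    congr 1; ext t
    rw [fourier_zero, fourier_neg, one_mul, mul_one]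
  rw [← h1', fhat, fhat, fourierCoeff, fourierCoeff]
  simp only [smul_eq_mul]
  rw [← integral_sub]
  · congr 1; ext t; push_cast; ring
  · exact (integrable_const (1:ℂ)).fourier_smul (-n)
  · exact hfi.fourier_smul (-n)

lemma det_le_of_psd {N : ℕ} (H : Matrix (Fin N) (Fin N) ℂ) (hH : H.PosSemidef) :
    H.det ≤ (Real.exp ((H - 1).trace.re) : ℂ) := by
  rw [hH.1.det_eq_prod_eigenvalues, trace_sub, hH.1.trace_eq_sum_eigenvalues]
  have : (∑ i, (hH.1.eigenvalues i : ℂ) - (1 : Matrix (Fin N) (Fin N) ℂ).trace).re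
     = ∑ i, (hH.1.eigenvalues i - 1) := by
    simp
  erw [this, Real.exp_sum]
  have h2 : ∏ i, hH.1.eigenvalues i ≤ ∏ i, Real.exp (hH.1.eigenvalues i - 1) := by
    refine Finset.prod_le_prod (fun i _ => hH.eigenvalues_nonneg i) fun i _ => ?_
    linarith [Real.add_one_le_exp (hH.1.eigenvalues i - 1)]
  have h3 : ((∏ i, hH.1.eigenvalues i : ℝ) : ℂ) ≤ ((∏ i, Real.exp (hH.1.eigenvalues i - 1) : ℝ) : ℂ) :=
    Complex.real_le_real.2 h2
  rw [Complex.ofReal_prod] at h3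
  exact h3

lemma abs_det {N : ℕ} (T L : Matrix (Fin N) (Fin N) ℂ) (hT : T.PosDef) (hT1 : (1 - T).PosSemidef)
    (hS : (T - Lᴴ * T⁻¹ * L).PosSemidef) :
    (1 - T⁻¹ * Lᴴ * T⁻¹ * L).det ≤ (Real.exp (-(frobSq L)) : ℂ) := by
  have hdet := (Matrix.isUnit_iff_isUnit_det _).1 hT.isUnit
  have i1 : T⁻¹ * T = 1 := nonsing_inv_mul _ hdet
  have i2 : T * T⁻¹ = 1 := mul_nonsing_inv _ hdet
  have hQ : (T⁻¹ - 1).PosSemidef := by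
    have h := hT1.add (hT.inv.posSemidef.conjTranspose_mul_mul_same (1 - T))
    rw [hT1.1.eq] at h
    convert h using 1
    simp [mul_sub, sub_mul, i1, i2]
  obtain ⟨B, hB⟩ : ∃ B : Matrix (Fin N) (Fin N) ℂ, T⁻¹ = Bᴴ * B := psd_fac _ hT.inv.posSemidef
  obtain ⟨D, hD⟩ : ∃ B : Matrix (Fin N) (Fin N) ℂ, T⁻¹ - 1 = Bᴴ * B := psd_fac _ hQ
  have hBT : B * T * Bᴴ = 1 := by
    have h3 : Bᴴ * (B * T) = 1 := by rw [← Matrix.mul_assoc, ← hB, i1]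
    exact mul_eq_one_comm.1 h3
  have e : 1 - B * (Lᴴ * T⁻¹ * L) * Bᴴ = B * (T - Lᴴ * T⁻¹ * L) * Bᴴ := by
    rw [mul_sub, sub_mul, hBT]
  have hH : (1 - B * (Lᴴ * T⁻¹ * L) * Bᴴ).PosSemidef := by
    rw [e]; exact hS.mul_mul_conjTranspose_same B
  have hd : (1 - T⁻¹ * Lᴴ * T⁻¹ * L).det = (1 - B * (Lᴴ * T⁻¹ * L) * Bᴴ).det := by
    rw [Matrix.det_one_sub_mul_comm (B * (Lᴴ * T⁻¹ * L)) Bᴴ]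
    congr 2
    rw [← Matrix.mul_assoc Bᴴ, ← hB]
    simp only [Matrix.mul_assoc]
  rw [hd]
  refine (det_le_of_psd _ hH).trans ?_
  have htr : (B * (Lᴴ * T⁻¹ * L) * Bᴴ).trace =
      (Lᴴ * L).trace + (D * Lᴴ * (D * Lᴴ)ᴴ).trace + ((D * L)ᴴ * (D * L)).trace
        + ((D * L * Dᴴ)ᴴ * (D * L * Dᴴ)).trace := by
    have hP : T⁻¹ = 1 + Dᴴ * D := by rw [← hD]; abel
    rw [Matrix.trace_mul_comm (B * (Lᴴ * T⁻¹ * L)) Bᴴ, ← Matrix.mul_assoc, ← hB, hP]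
    have t1 : (D * Lᴴ * (D * Lᴴ)ᴴ).trace = (Dᴴ * D * (Lᴴ * L)).trace := by
      rw [← Matrix.trace_mul_cycle D (Lᴴ * L) Dᴴ]
      simp only [conjTranspose_mul, conjTranspose_conjTranspose, Matrix.mul_assoc]
    have t2 : ((D * L * Dᴴ)ᴴ * (D * L * Dᴴ)).trace = (Dᴴ * D * (Lᴴ * (Dᴴ * D) * L)).trace := by
      rw [← Matrix.trace_mul_cycle D _ Dᴴ]
      simp only [conjTranspose_mul, conjTranspose_conjTranspose, Matrix.mul_assoc]
    rw [t1, t2]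
    simp only [add_mul, mul_add, one_mul, mul_one, trace_add, conjTranspose_mul, Matrix.mul_assoc]
    ring
  have hF : (Lᴴ * L).trace.re = frobSq L := by
    simp only [trace, diag, Matrix.mul_apply, conjTranspose_apply, frobSq, Complex.re_sum]
    rw [Finset.sum_comm]
    refine Finset.sum_congr rfl fun i _ => Finset.sum_congr rfl fun j _ => ?_
    rw [RCLike.star_def, Complex.conj_mul']
    norm_cast
  have p1 := (Complex.le_def.1 (posSemidef_self_mul_conjTranspose (D * Lᴴ)).trace_nonneg).1
  have p2 := (Complex.le_def.1 (posSemidef_conjTranspose_mul_self (D * L)).trace_nonneg).1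
  have p3 := (Complex.le_def.1 (posSemidef_conjTranspose_mul_self (D * L * Dᴴ)).trace_nonneg).1
  have hfin : (1 - B * (Lᴴ * T⁻¹ * L) * Bᴴ - 1).trace.re ≤ -(frobSq L) := by
    rw [sub_right_comm, sub_self, zero_sub, trace_neg, htr, ← hF]
    simp only [Complex.neg_re, Complex.add_re, Complex.zero_re] at *
    linarith
  exact_mod_cast Real.exp_le_exp.2 hfin

/-- If `0 ≤ f ≤ 1` and `T_N(f)` is invertible, then
`det(I - T_N(f)⁻¹ Λ_{N,ℓ}(f)* T_N(f)⁻¹ Λ_{N,ℓ}(f)) ≤ exp(-‖Λ_{N,ℓ}(f)‖_HS²)`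
(the determinant is a real number; the inequality is in the complex order). -/
theorem det_le_exp
    (f : AddCircle (1:ℝ) → ℝ) (hmeas : Measurable f)
    (h0 : ∀ t, 0 ≤ f t) (h1 : ∀ t, f t ≤ 1) (hint : Integrable f)
    (N ℓ : ℕ) (hN : 1 ≤ N) (hℓ : 1 ≤ ℓ)
    (hinv : IsUnit (Tmat f N).det) :
    (1 - (Tmat f N)⁻¹ * (Lmat f N ℓ)ᴴ * (Tmat f N)⁻¹ * Lmat f N ℓ).det ≤
      (Real.exp (-(frobSq (Lmat f N ℓ))) : ℂ) := by
  have hT0 : (Tmat f N).PosSemidef := psd_gen f hmeas h0 h1 (fun i : Fin N => ((i : ℕ) : ℤ))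
  have hT : (Tmat f N).PosDef := hT0.posDef_iff_det_ne_zero.2 hinv.ne_zero
  have hT1 : (1 - Tmat f N).PosSemidef := by
    have := psd_gen (fun t => 1 - f t) (by fun_prop) (fun t => by linarith [h1 t])
      (fun t => by linarith [h0 t]) (fun i : Fin N => ((i : ℕ) : ℤ))
    convert this using 1
    ext i j
    simp only [of_apply, fhat_one_sub f hmeas h0 h1, Tmat, Matrix.sub_apply, one_apply, sub_eq_zero,
      Nat.cast_inj, Fin.ext_iff]
  refine abs_det _ _ hT hT1 ?_
  have := hT.isUnit.invertible
  rw [← hT.fromBlocks₁₁]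
  have hb := psd_gen f hmeas h0 h1
    (Sum.elim (fun i : Fin N => ((i : ℕ) : ℤ)) (fun i : Fin N => ((i : ℕ) : ℤ) + N + ℓ))
  have heq : fromBlocks (Tmat f N) (Lmat f N ℓ) (Lmat f N ℓ)ᴴ (Tmat f N) = Matrix.of fun i j =>
      fhat f (Sum.elim (fun i : Fin N => ((i : ℕ) : ℤ)) (fun i : Fin N => ((i : ℕ) : ℤ) + N + ℓ) i
        - Sum.elim (fun i : Fin N => ((i : ℕ) : ℤ)) (fun i : Fin N => ((i : ℕ) : ℤ) + N + ℓ) j) := by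
    ext i j
    rcases i with i | i
    · rcases j with j | j
      · simp [Tmat]
      · simp [Lmat]
    · rcases j with j | j
      · exact hb.1.apply (Sum.inr i) (Sum.inl j)
      · simp [Tmat]
  rw [heq]
  exact hb
end
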